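/- arXiv:2010.12958 — 5 statements merged into one kernel-verified Lean document; each statement's English description precedes it below -/
import Mathlib

section
/- Let G be a discrete group and let H be a normal subgroup of G. If Sub^c_H is closed in Sub_H and Sub^c_{G/H} is closed in Sub_{G/H}, then Sub^c_G is closed in Sub_G. In particular, if H has finite index in G and Sub^c_H is closed in Sub_H, then Sub^c_G is closed in Sub_G. -/
/-- The Chabauty topology on the space of subgroups of a discrete group `G`:
it is generated by the sub-basic sets `{H | H ∩ K = ∅}` for `K` finite (= compact in a
discrete group) and `{H | H ∩ U ≠ ∅}` for arbitrary `U` (= open in a discrete group). -/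
instance chabautyTopology (G : Type*) [Group G] : TopologicalSpace (Subgroup G) :=
  TopologicalSpace.generateFrom
    ({S | ∃ K : Set G, K.Finite ∧ S = {H : Subgroup G | (H : Set G) ∩ K = ∅}} ∪
     {S | ∃ U : Set G, S = {H : Subgroup G | ((H : Set G) ∩ U).Nonempty}})

/-- `Sub^c_G`: the set of cyclic subgroups of a (discrete) group `G`. -/
def cyclicSubgroups (G : Type*) [Group G] : Set (Subgroup G) :=
  {H : Subgroup G | ∃ x : G, H = Subgroup.zpowers x}

/-- `Sub^a_G`: the set of abelian subgroups of a (discrete) group `G`. -/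
def abelianSubgroups (G : Type*) [Group G] : Set (Subgroup G) :=
  {H : Subgroup G | ∀ a ∈ H, ∀ b ∈ H, a * b = b * a}

/-- The image of a subgroup under the `n`-th power (`n : ℤ`) of an automorphism. -/
def autMap {G : Type*} [Group G] (T : MulAut G) (n : ℤ) (H : Subgroup G) : Subgroup G :=
  Subgroup.map (T ^ n).toMonoidHom H

/-- The orbit of a pair of subgroups under the powers of an automorphism. -/
def orbitPairs {G : Type*} [Group G] (T : MulAut G) (A B : Subgroup G) :
    Set (Subgroup G × Subgroup G) :=
  Set.range fun n : ℤ => (autMap T n A, autMap T n B)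

/-- The automorphism `T` acts distally on the (`T`-invariant) subset `Y` of `Sub_G`:
for distinct `A, B ∈ Y`, the closure of the orbit of `(A, B)` does not meet
the diagonal of `Y`. -/
def ActsDistallyOn {G : Type*} [Group G] (T : MulAut G) (Y : Set (Subgroup G)) : Prop :=
  ∀ A ∈ Y, ∀ B ∈ Y, A ≠ B → ∀ C ∈ Y, (C, C) ∉ closure (orbitPairs T A B)

/-- The automorphism `T` acts expansively on the compact (`T`-invariant) subset `Y` of
`Sub_G`: there is a neighbourhood `W` of the diagonal (an entourage for the unique
uniformity of the compact Hausdorff space `Y`, equivalently `d < δ` for an expansivity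
constant `δ` of a compatible metric `d`) such that any two distinct points of `Y` are
separated outside of `W` by some power of `T`. -/
def ActsExpansivelyOn {G : Type*} [Group G] (T : MulAut G) (Y : Set (Subgroup G)) : Prop :=
  ∃ W : Set (Subgroup G × Subgroup G), IsOpen W ∧ (∀ A ∈ Y, (A, A) ∈ W) ∧
    ∀ A ∈ Y, ∀ B ∈ Y, A ≠ B → ∃ n : ℤ, (autMap T n A, autMap T n B) ∉ W

/-- An automorphism `T` of a discrete group `G` belongs to class (NC) if for every
nontrivial cyclic subgroup `A` of `G`, no sequence `T^{n_k}(A)` converges to the trivial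
subgroup in the Chabauty topology. -/
def ClassNC {G : Type*} [Group G] (T : MulAut G) : Prop :=
  ∀ A ∈ cyclicSubgroups G, A ≠ ⊥ →
    ∀ n : ℕ → ℤ, ¬ Filter.Tendsto (fun k => autMap T (n k) A) Filter.atTop (nhds ⊥)

/-- A group is polycyclic if it has a finite subnormal series with cyclic quotients. -/
def IsPolycyclic (G : Type*) [Group G] : Prop :=
  ∃ (k : ℕ) (s : Fin (k + 1) → Subgroup G),
    s 0 = ⊤ ∧ s (Fin.last k) = ⊥ ∧
    ∀ i : Fin k, s i.succ ≤ s i.castSucc ∧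
      ∃ hn : ((s i.succ).subgroupOf (s i.castSucc)).Normal,
        haveI := hn
        IsCyclic (↥(s i.castSucc) ⧸ (s i.succ).subgroupOf (s i.castSucc))

/-!
The closure of the set of cyclic subgroups is the set of locally cyclic subgroups, so that set is
closed exactly when every locally cyclic subgroup `A` is cyclic, and for this it suffices that `A`
is finitely generated. If `Sub^c_H` is closed then `A ∩ H` is cyclic; hence `A` is finitely
generated when `A ∩ H` has finite index in `A`, and also when the image of `A` in `G ⧸ H` is
cyclic.
-/

open Filter Topology

/-- A group is locally cyclic if each of its finitely generated subgroups is cyclic. The locally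
cyclic subgroups of a discrete group are the Chabauty limits of cyclic ones. -/
def IsLocallyCyclic (G : Type*) [Group G] : Prop :=
  ∀ K : Subgroup G, K.FG → IsCyclic K

section FinitelyGenerated

variable {G G' : Type*} [Group G] [Group G']

theorem exists_fg_map_eq_of_le_range {f : G →* G'} {K : Subgroup G'} (hK : K.FG)
    (hle : K ≤ f.range) : ∃ L : Subgroup G, L.FG ∧ L.map f = K := by
  obtain ⟨S, rfl, hS⟩ := K.fg_iff.1 hK
  have hSrange : S ⊆ f '' Set.univ := by
    rw [Set.image_univ]
    exact (Subgroup.closure_le _).1 hle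
  obtain ⟨T, -, hT, rfl⟩ := Set.exists_subset_image_finite_and.1 ⟨S, hSrange, hS, rfl⟩
  exact ⟨Subgroup.closure T, (Subgroup.fg_iff _).2 ⟨T, rfl, hT⟩, f.map_closure T⟩

theorem subgroup_fg_map {K : Subgroup G} (hK : K.FG) (f : G →* G') : (K.map f).FG := by
  have : Group.FG K := (Group.fg_iff_subgroup_fg K).2 hK
  exact (Group.fg_iff_subgroup_fg _).1 (Group.fg_of_surjective (f.subgroupMap_surjective K))

theorem group_fg_of_fg_ker_of_fg_range (f : G →* G') [Group.FG f.ker] [Group.FG f.range] :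
    Group.FG G := by
  have hker : f.ker.FG := (Group.fg_iff_subgroup_fg _).1 ‹_›
  have hrange : f.range.FG := (Group.fg_iff_subgroup_fg _).1 ‹_›
  obtain ⟨L, hL, hmap⟩ := exists_fg_map_eq_of_le_range hrange le_rfl
  have hsup : L ⊔ f.ker = ⊤ := (Subgroup.map_eq_range_iff.1 hmap).eq_top
  exact Group.fg_def.2 (hsup ▸ hL.sup hker)

theorem group_fg_of_fg_of_finiteIndex (H : Subgroup G) [H.FiniteIndex] [Group.FG H] :
    Group.FG G := by
  have hH : H.FG := (Group.fg_iff_subgroup_fg _).1 ‹_›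
  have : Finite (G ⧸ H) := H.finite_quotient_of_finiteIndex
  let T : Set G := Set.range (Quotient.out : G ⧸ H → G)
  have hsup : H ⊔ Subgroup.closure T = ⊤ := by
    refine eq_top_iff.2 fun g _ ↦ ?_
    obtain ⟨h, hh⟩ := QuotientGroup.mk_out_eq_mul H g
    rw [eq_mul_inv_of_mul_eq hh.symm]
    exact mul_mem (Subgroup.mem_sup_right (Subgroup.subset_closure (Set.mem_range_self _)))
      (Subgroup.mem_sup_left (inv_mem h.2))
  have hT : (Subgroup.closure T).FG := (Subgroup.fg_iff _).2 ⟨T, rfl, Set.finite_range _⟩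
  exact Group.fg_def.2 (hsup ▸ hH.sup hT)

theorem group_fg_of_isCyclic [IsCyclic G] : Group.FG G := by
  obtain ⟨x, hx⟩ := isCyclic_iff_exists_zpowers_eq_top.1 ‹IsCyclic G›
  exact Group.fg_iff.2 ⟨{x}, by rw [← Subgroup.zpowers_eq_closure, hx], Set.finite_singleton x⟩

end FinitelyGenerated

namespace IsLocallyCyclic

variable {G G' : Type*} [Group G] [Group G']

theorem isCyclic [Group.FG G] (hG : IsLocallyCyclic G) : IsCyclic G :=
  have : IsCyclic (⊤ : Subgroup G) := hG ⊤ (Group.fg_def.1 ‹_›)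
  isCyclic_of_surjective _ Subgroup.topEquiv.surjective

theorem of_injective (hG' : IsLocallyCyclic G') (f : G →* G') (hf : Function.Injective f) :
    IsLocallyCyclic G := fun K hK ↦
  have : IsCyclic (K.map f) := hG' _ (subgroup_fg_map hK f)
  isCyclic_of_surjective _ (K.equivMapOfInjective f hf).symm.surjective

theorem of_surjective (hG : IsLocallyCyclic G) (f : G →* G') (hf : Function.Surjective f) :
    IsLocallyCyclic G' := fun K hK ↦ by
  obtain ⟨L, hL, rfl⟩ := exists_fg_map_eq_of_le_range hK (f.range_eq_top.2 hf ▸ le_top)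
  have : IsCyclic L := hG L hL
  exact isCyclic_of_surjective _ (f.subgroupMap_surjective L)

end IsLocallyCyclic

section Chabauty

variable {G : Type*} [Group G]

theorem mem_cyclicSubgroups_iff {A : Subgroup G} : A ∈ cyclicSubgroups G ↔ IsCyclic A := by
  simp only [A.isCyclic_iff_exists_zpowers_eq_top, cyclicSubgroups, Set.mem_ofPred_eq, eq_comm]

theorem isOpen_setOf_mem (g : G) : IsOpen {B : Subgroup G | g ∈ B} :=
  TopologicalSpace.isOpen_generateFrom_of_mem (.inr ⟨{g}, by simp⟩)

theorem isOpen_setOf_le_of_fg {K : Subgroup G} (hK : K.FG) :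
    IsOpen {B : Subgroup G | K ≤ B} := by
  obtain ⟨S, rfl, hS⟩ := K.fg_iff.1 hK
  have : {B : Subgroup G | Subgroup.closure S ≤ B} = ⋂ g ∈ S, {B : Subgroup G | g ∈ B} := by
    ext B
    simp [Set.subset_def]
  exact this ▸ hS.isOpen_biInter fun g _ ↦ isOpen_setOf_mem g

theorem tendsto_map_subtype_closure_finset (A : Subgroup G) :
    Tendsto (fun F : Finset A ↦ (Subgroup.closure (F : Set A)).map A.subtype) atTop (𝓝 A) := by
  refine TopologicalSpace.tendsto_nhds_generateFrom_iff.2 ?_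
  rintro _ (⟨K, _, rfl⟩ | ⟨U, rfl⟩) hA
  · exact Eventually.of_forall fun F ↦
      Set.subset_eq_empty (Set.inter_subset_inter_left K (Subgroup.map_subtype_le _)) hA
  · obtain ⟨u, huA, huU⟩ := hA
    filter_upwards [eventually_ge_atTop {(⟨u, huA⟩ : A)}] with F hF
    have huF : (⟨u, huA⟩ : A) ∈ F := hF (Finset.mem_singleton_self _)
    exact ⟨u, ⟨_, Subgroup.subset_closure huF, rfl⟩, huU⟩

theorem mem_closure_cyclicSubgroups_iff {A : Subgroup G} :
    A ∈ closure (cyclicSubgroups G) ↔ IsLocallyCyclic A := by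
  refine ⟨fun hA K hK ↦ ?_, fun hA ↦ ?_⟩
  · obtain ⟨B, hKB, hB⟩ := mem_closure_iff.1 hA _
      (isOpen_setOf_le_of_fg (subgroup_fg_map hK A.subtype)) (Subgroup.map_subtype_le K)
    have : IsCyclic B := mem_cyclicSubgroups_iff.1 hB
    have : IsCyclic (K.map A.subtype) := Subgroup.isCyclic_of_le hKB
    exact isCyclic_of_surjective _
      (K.equivMapOfInjective A.subtype A.subtype_injective).symm.surjective
  · refine mem_closure_of_tendsto (tendsto_map_subtype_closure_finset A) (.of_forall fun F ↦ ?_)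
    have : IsCyclic (Subgroup.closure (F : Set A)) := hA _ ⟨F, rfl⟩
    exact mem_cyclicSubgroups_iff.2 (isCyclic_of_surjective _ (A.subtype.subgroupMap_surjective _))

theorem isClosed_cyclicSubgroups_iff :
    IsClosed (cyclicSubgroups G) ↔ ∀ A : Subgroup G, IsLocallyCyclic A → IsCyclic A := by
  simp only [← closure_subset_iff_isClosed, Set.subset_def, mem_closure_cyclicSubgroups_iff,
    mem_cyclicSubgroups_iff]

theorem isCyclic_range_of_isClosed {A : Type*} [Group A] (hG : IsClosed (cyclicSubgroups G))
    (hA : IsLocallyCyclic A) (f : A →* G) : IsCyclic f.range :=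
  isClosed_cyclicSubgroups_iff.1 hG f.range
    (hA.of_surjective f.rangeRestrict f.rangeRestrict_surjective)

theorem isCyclic_subgroupOf_of_isClosed {H A : Subgroup G} (hH : IsClosed (cyclicSubgroups H))
    (hA : IsLocallyCyclic A) : IsCyclic (H.subgroupOf A) := by
  let f : H.subgroupOf A →* H := A.subtype.subgroupComap H
  have hf : Function.Injective f := Function.Injective.of_comp (f := H.subtype)
    (A.subtype_injective.comp (H.subgroupOf A).subtype_injective)
  have hHA : IsLocallyCyclic (H.subgroupOf A) :=
    hA.of_injective _ (H.subgroupOf A).subtype_injective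
  have : IsCyclic f.range := isCyclic_range_of_isClosed hH hHA f
  exact isCyclic_of_injective f.rangeRestrict (f.rangeRestrict_injective_iff.2 hf)

theorem isClosed_cyclicSubgroups_of_forall_group_fg {H : Subgroup G}
    (hH : IsClosed (cyclicSubgroups H))
    (hfg : ∀ A : Subgroup G, IsLocallyCyclic A → Group.FG (H.subgroupOf A) → Group.FG A) :
    IsClosed (cyclicSubgroups G) := by
  refine isClosed_cyclicSubgroups_iff.2 fun A hA ↦ ?_
  have : IsCyclic (H.subgroupOf A) := isCyclic_subgroupOf_of_isClosed hH hA
  have : Group.FG A := hfg A hA group_fg_of_isCyclic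
  exact hA.isCyclic

end Chabauty

theorem cyclicSubgroups_isClosed_of_normal_general {G : Type*} [Group G] (H : Subgroup G)
    (hH : IsClosed (cyclicSubgroups H)) :
    (∀ [H.Normal], IsClosed (cyclicSubgroups (G ⧸ H)) → IsClosed (cyclicSubgroups G)) ∧
    (H.FiniteIndex → IsClosed (cyclicSubgroups G)) := by
  constructor
  · refine fun hQ ↦ isClosed_cyclicSubgroups_of_forall_group_fg hH fun A hA hHA ↦ ?_
    let f : A →* G ⧸ H := (QuotientGroup.mk' H).comp A.subtype
    have hker : f.ker = H.subgroupOf A := by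
      rw [← MonoidHom.comap_ker, QuotientGroup.ker_mk', Subgroup.subgroupOf]
    have : Group.FG f.ker := hker ▸ hHA
    have : IsCyclic f.range := isCyclic_range_of_isClosed hQ hA f
    have : Group.FG f.range := group_fg_of_isCyclic
    exact group_fg_of_fg_ker_of_fg_range f
  · exact fun _ ↦ isClosed_cyclicSubgroups_of_forall_group_fg hH fun A _ _ ↦
      group_fg_of_fg_of_finiteIndex (H.subgroupOf A)

/-- if `Sub^c_H` and `Sub^c_{G/H}` are closed, then `Sub^c_G` is closed;
in particular this holds when `H` has finite index and `Sub^c_H` is closed. -/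
theorem cyclicSubgroups_isClosed_of_normal {G : Type*} [Group G]
    (H : Subgroup G) [H.Normal] :
    (IsClosed (cyclicSubgroups ↥H) → IsClosed (cyclicSubgroups (G ⧸ H)) →
      IsClosed (cyclicSubgroups G)) ∧
    (H.FiniteIndex → IsClosed (cyclicSubgroups ↥H) → IsClosed (cyclicSubgroups G)) :=
  ⟨fun hH ↦ (cyclicSubgroups_isClosed_of_normal_general H hH).1,
    fun hfin hH ↦ (cyclicSubgroups_isClosed_of_normal_general H hH).2 hfin⟩
end

section
/- Let G be a discrete group and let T be an automorphism of G belonging to class (NC). Let H be a normal subgroup of G with T|_H = Id, and let x be a nontrivial torsion element of G with T(x) ∈ xH. Then there exist integers l, n ≥ 1 such that x^l ≠ e and T^n(x^l) = x^l. Moreover, if the center Z(H) of H is finitely generated and m is the order of the unique maximal finite subgroup of Z(H), then for every nontrivial torsion element x ∈ G with T(x) ∈ xH there exists an integer l ≥ 1 (depending on x) such that T^m(x^l) = x^l ≠ e. -/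
section Chabauty

variable {G : Type*} [Group G]

theorem tendsto_chabauty_bot_iff {ι : Type*} {A : ι → Subgroup G} {l : Filter ι} :
    Filter.Tendsto A l (nhds ⊥) ↔ ∀ g : G, g ≠ 1 → ∀ᶠ i in l, g ∉ A i := by
  refine TopologicalSpace.tendsto_nhds_generateFrom_iff.trans ⟨fun h g hg ↦ ?_, fun h ↦ ?_⟩
  · have avoids_g := h _ (.inl ⟨{g}, Set.finite_singleton g, rfl⟩) (by simpa using hg)
    filter_upwards [avoids_g] with i hi using Set.inter_singleton_eq_empty.1 hi
  · rintro _ (⟨K, hK, rfl⟩ | ⟨U, rfl⟩) hbot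
    · have ne_one_of_mem : ∀ g ∈ K, g ≠ 1 := by
        rintro _ hg rfl
        exact Set.eq_empty_iff_forall_notMem.1 hbot 1 ⟨one_mem _, hg⟩
      filter_upwards [(Filter.eventually_all_finite hK).2 fun g hg ↦ h g (ne_one_of_mem g hg)]
        with i hi
      exact Set.eq_empty_of_forall_notMem fun g hg ↦ hi g hg.2 hg.1
    · obtain ⟨g, hg, hgU⟩ := hbot
      obtain rfl : g = 1 := Subgroup.mem_bot.1 hg
      exact Filter.Eventually.of_forall fun i ↦ ⟨1, one_mem (A i), hgU⟩

theorem exists_pow_apply_eq_self_of_frequently_mem_autMap {T : MulAut G} {A : Subgroup G}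
    [Finite A] {g : G} (hg : ∃ᶠ k : ℕ in Filter.atTop, g ∈ autMap T k A) :
    ∃ a ∈ A, (∃ k : ℕ, (T ^ k) a = g) ∧ ∃ n : ℕ, 0 < n ∧ (T ^ n) a = a := by
  have preimage_mem : Set.MapsTo (fun k : ℕ ↦ (T ^ k)⁻¹ g) {k | g ∈ autMap T k A} A := by
    rintro k ⟨a, ha, rfl⟩
    simpa using ha
  obtain ⟨i, hi, j, -, hij, heq⟩ :=
    (Nat.frequently_atTop_iff_infinite.1 hg).exists_lt_map_eq_of_mapsTo preimage_mem
      (Set.toFinite (A : Set G))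
  refine ⟨(T ^ i)⁻¹ g, preimage_mem hi, ⟨i, by simp⟩, j - i, Nat.sub_pos_of_lt hij, ?_⟩
  calc (T ^ (j - i)) ((T ^ i)⁻¹ g) = (T ^ (j - i)) ((T ^ j)⁻¹ g) := congrArg _ heq
    _ = (T ^ i)⁻¹ g := by
      rw [← MulAut.mul_apply, ← pow_mul_pow_sub T hij.le, mul_inv_rev, mul_inv_cancel_left]

theorem ClassNC.exists_pow_apply_eq_self {T : MulAut G} (hT : ClassNC T) {A : Subgroup G}
    [Finite A] (hA : A ∈ cyclicSubgroups G) (hne : A ≠ ⊥) :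
    ∃ a ∈ A, a ≠ 1 ∧ ∃ n : ℕ, 0 < n ∧ (T ^ n) a = a := by
  have not_tendsto := hT A hA hne fun k ↦ k
  simp only [tendsto_chabauty_bot_iff, not_forall] at not_tendsto
  obtain ⟨g, hg, recurs⟩ := not_tendsto
  obtain ⟨a, haA, ⟨k, rfl⟩, hper⟩ := exists_pow_apply_eq_self_of_frequently_mem_autMap recurs
  exact ⟨a, haA, fun ha ↦ hg (by rw [ha, map_one]), hper⟩

theorem ClassNC.exists_pow_apply_pow_eq_self {T : MulAut G} (hT : ClassNC T) {x : G}
    (hx : x ≠ 1) (hfin : IsOfFinOrder x) :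
    ∃ l : ℕ, 0 < l ∧ x ^ l ≠ 1 ∧ ∃ n : ℕ, 0 < n ∧ (T ^ n) (x ^ l) = x ^ l := by
  have : Finite (Subgroup.zpowers x) := hfin.finite_zpowers
  obtain ⟨a, ha, hne, hper⟩ :=
    hT.exists_pow_apply_eq_self ⟨x, rfl⟩ (Subgroup.zpowers_ne_bot.2 hx)
  obtain ⟨l, rfl⟩ := hfin.mem_powers_iff_mem_zpowers.2 ha
  exact ⟨l, Nat.pos_of_ne_zero fun h ↦ hne (h ▸ pow_zero x), hne, hper⟩

end Chabauty

theorem mulAut_pow_apply_eq_mul_pow {M : Type*} [Monoid M] {T : MulAut M} {y h : M}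
    (hy : T y = y * h) (hh : T h = h) (k : ℕ) : (T ^ k) y = y * h ^ k := by
  induction k with
  | zero => simp
  | succ k ih =>
    rw [pow_succ', MulAut.mul_apply, ih, map_mul, map_pow, hh, hy, pow_succ', mul_assoc]

section Centralizer

variable {G : Type*} [Group G] {H : Subgroup G}

theorem inv_mul_map_mem_centralizer {S : Set G} {f : G →* G} (hid : ∀ s ∈ S, f s = s) {y : G}
    (hy : y ∈ Subgroup.normalizer S) : y⁻¹ * f y ∈ Subgroup.centralizer S := by
  refine Subgroup.mem_centralizer_iff.2 fun k hk ↦ ?_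
  have conj_fixed : f y * k * (f y)⁻¹ = y * k * y⁻¹ := by
    simpa [hid k hk] using hid _ ((Subgroup.mem_set_normalizer_iff.1 hy k).1 hk)
  calc k * (y⁻¹ * f y) = y⁻¹ * (y * k * y⁻¹) * f y := by group
    _ = y⁻¹ * (f y * k * (f y)⁻¹) * f y := by rw [conj_fixed]
    _ = y⁻¹ * f y * k := by group

theorem inv_pow_mul_map_pow_mem {f : G →* G} {x : G}
    (hx : x ∈ Subgroup.normalizer (H : Set G)) (hfx : x⁻¹ * f x ∈ H) (l : ℕ) :
    (x ^ l)⁻¹ * f (x ^ l) ∈ H := by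
  induction l with
  | zero => simp
  | succ l ih =>
    have cocycle : (x ^ (l + 1))⁻¹ * f (x ^ (l + 1)) =
        x⁻¹ * ((x ^ l)⁻¹ * f (x ^ l)) * x * (x⁻¹ * f x) := by
      simp [pow_succ, mul_assoc]
    rw [cocycle]
    exact mul_mem ((Subgroup.mem_normalizer_iff''.1 hx _).1 ih) hfx

theorem pow_apply_eq_self_of_torsion_center_pow_eq_one {T : MulAut G}
    (hid : ∀ h ∈ H, T h = h) {y : G} (hy : y ∈ Subgroup.normalizer (H : Set G))
    (hTy : y⁻¹ * T y ∈ H) {n : ℕ} (hn : 0 < n) (hfix : (T ^ n) y = y) {m : ℕ}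
    (hm : ∀ z ∈ H ⊓ Subgroup.centralizer (H : Set G), IsOfFinOrder z → z ^ m = 1) :
    (T ^ m) y = y := by
  have orbit : ∀ k : ℕ, (T ^ k) y = y * (y⁻¹ * T y) ^ k :=
    mulAut_pow_apply_eq_mul_pow (mul_inv_cancel_left y (T y)).symm (hid _ hTy)
  have central : y⁻¹ * T y ∈ Subgroup.centralizer (H : Set G) :=
    inv_mul_map_mem_centralizer (f := T.toMonoidHom) hid hy
  have torsion : IsOfFinOrder (y⁻¹ * T y) :=
    isOfFinOrder_iff_pow_eq_one.2 ⟨n, hn, mul_eq_left.1 ((orbit n).symm.trans hfix)⟩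
  rw [orbit, hm _ ⟨hTy, central⟩ torsion, mul_one]

theorem pow_card_eq_one_of_forall_finite_le {K F : Subgroup G}
    (hF : ∀ F' ≤ K, Finite F' → F' ≤ F) {z : G} (hz : z ∈ K) (hfin : IsOfFinOrder z) :
    z ^ Nat.card F = 1 := by
  have z_mem : z ∈ F :=
    hF _ (Subgroup.zpowers_le.2 hz) hfin.finite_zpowers (Subgroup.mem_zpowers z)
  exact congrArg Subtype.val (pow_card_eq_one' (x := (⟨z, z_mem⟩ : F)))

end Centralizer

theorem classNC_fixes_power_of_torsion_general {G : Type*} [Group G] {T : MulAut G}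
    (hT : ClassNC T) {x : G} (hx : x ≠ 1) (hfin : IsOfFinOrder x) :
    ∃ l : ℕ, 0 < l ∧ x ^ l ≠ 1 ∧ (∃ n : ℕ, 0 < n ∧ (T ^ n) (x ^ l) = x ^ l) ∧
      ∀ H : Subgroup G, (∀ h ∈ H, T h = h) → x ∈ Subgroup.normalizer (H : Set G) →
        x⁻¹ * T x ∈ H → ∀ m : ℕ,
          (∀ z ∈ H ⊓ Subgroup.centralizer (H : Set G), IsOfFinOrder z → z ^ m = 1) →
            (T ^ m) (x ^ l) = x ^ l := by
  obtain ⟨l, hl, hne, n, hn, hfix⟩ := hT.exists_pow_apply_pow_eq_self hx hfin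
  refine ⟨l, hl, hne, ⟨n, hn, hfix⟩, fun H hid hxN hxH m hm ↦ ?_⟩
  exact pow_apply_eq_self_of_torsion_center_pow_eq_one hid (pow_mem hxN l)
    (inv_pow_mul_map_pow_mem (f := T.toMonoidHom) hxN hxH l) hn hfix hm

/-- for `T` in class (NC) restricting to the identity on a normal subgroup
`H` and a nontrivial torsion element `x` with `T(x) ∈ xH`, some nontrivial power `x^l`
is fixed by some `T^n`; if moreover `Z(H)` is finitely generated with maximal finite
subgroup of order `m`, then `T^m(x^l) = x^l ≠ e` for some `l ≥ 1`. -/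
theorem classNC_fixes_power_of_torsion {G : Type*} [Group G] (T : MulAut G)
    (hT : ClassNC T) (H : Subgroup G) [H.Normal] (hid : ∀ h ∈ H, T h = h) :
    (∀ x : G, x ≠ 1 → IsOfFinOrder x → x⁻¹ * T x ∈ H →
      ∃ l n : ℕ, 0 < l ∧ 0 < n ∧ x ^ l ≠ 1 ∧ (T ^ n) (x ^ l) = x ^ l) ∧
    (Group.FG ↥(H ⊓ Subgroup.centralizer (H : Set G)) →
      ∀ F : Subgroup G, F ≤ H ⊓ Subgroup.centralizer (H : Set G) → Finite ↥F →
        (∀ F' : Subgroup G, F' ≤ H ⊓ Subgroup.centralizer (H : Set G) → Finite ↥F' →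
          F' ≤ F) →
        ∀ x : G, x ≠ 1 → IsOfFinOrder x → x⁻¹ * T x ∈ H →
          ∃ l : ℕ, 0 < l ∧ x ^ l ≠ 1 ∧ (T ^ Nat.card ↥F) (x ^ l) = x ^ l) := by
  refine ⟨fun x hx hfin _ ↦ ?_, fun _ F _ _ hmax x hx hfin hxH ↦ ?_⟩
  · obtain ⟨l, hl, hne, ⟨n, hn, hfix⟩, -⟩ := classNC_fixes_power_of_torsion_general hT hx hfin
    exact ⟨l, n, hl, hn, hne, hfix⟩
  · obtain ⟨l, hl, hne, -, hcentral⟩ := classNC_fixes_power_of_torsion_general hT hx hfin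
    exact ⟨l, hl, hne, hcentral H hid (H.normalizer_eq_top ▸ Subgroup.mem_top x) hxH _
      fun z ↦ pow_card_eq_one_of_forall_finite_le hmax⟩
end

section
/- Let G be a discrete group and let H be a normal subgroup of finite index in G such that the center Z(H) of H is finitely generated. Let T be an automorphism of G belonging to class (NC) with T|_H = Id. Then there exists an integer m ≥ 1 such that G' = {g ∈ G : T^m(g) = g} is a subgroup of finite index in G, H ⊆ G', T^m acts trivially on G/Z(H) (i.e., T^m(g) ∈ g·Z(H) for all g ∈ G), and the following hold: for every nontrivial element x ∈ G, the cyclic subgroup generated by x intersects G' nontrivially; moreover, if x ∉ G', then the set {T^n(x) : n ∈ ℕ} is infinite. -/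
/-! Since `T` fixes `H` pointwise, the `T`-period of `g` depends only on the coset `gH`, so only
finitely many periods occur. Hence some power `T ^ m` acts trivially on the finite group `G ⧸ H`
and fixes every `T`-periodic element; a point outside its fixed subgroup has an infinite orbit.

A cyclic subgroup of infinite order meets `H` because `H` has finite index. In a finite cyclic
subgroup some nontrivial element is `T`-periodic: otherwise each of the finitely many nontrivial
elements leaves every finite set under the powers of `T`, so the subgroup converges to the trivial
one, against (NC). -/

section

open Filter Topology MulAction

theorem exists_pos_forall_dvd_of_finite {s : Set ℕ} (hs : s.Finite) :
    ∃ n : ℕ, 0 < n ∧ ∀ a ∈ s, a ≠ 0 → a ∣ n :=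
  ⟨∏ a ∈ hs.toFinset.erase 0, a,
    Finset.prod_pos fun _ ha => Nat.pos_of_ne_zero (Finset.ne_of_mem_erase ha),
    fun _ ha ha0 => Finset.dvd_prod_of_mem _ (Finset.mem_erase.2 ⟨ha0, hs.mem_toFinset.2 ha⟩)⟩

theorem zpow_smul_injective_of_period_eq_zero {G α : Type*} [Group G] [MulAction G α] {g : G}
    {a : α} (h : period g a = 0) : Function.Injective fun n : ℤ => g ^ n • a := by
  intro i j (hij : g ^ i • a = g ^ j • a)
  have hfix : g ^ (-i + j) • a = a := by
    rw [zpow_add, mul_smul, ← hij, ← mul_smul, ← zpow_add, neg_add_cancel, zpow_zero, one_smul]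
  have hdvd := zpow_smul_eq_iff_period_dvd.1 hfix
  rw [h, Nat.cast_zero, zero_dvd_iff] at hdvd
  exact neg_add_eq_zero.1 hdvd

section Period

variable {M G : Type*} [Monoid M] [Group G] [MulDistribMulAction M G] {m : M}

theorem period_mul_eq_of_smul_eq {h : G} (hh : m • h = h) (g : G) :
    period m (g * h) = period m g := by
  have hfix (n : ℕ) : m ^ n • h = h :=
    pow_smul_eq_iff_period_dvd.2 (period_eq_one_iff.2 hh ▸ one_dvd n)
  simp only [period_eq_minimalPeriod, Function.minimalPeriod_eq_minimalPeriod_iff,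
    isPeriodicPt_smul_iff, smul_mul', hfix, mul_left_inj, implies_true]

theorem finite_range_period {H : Subgroup G} [H.FiniteIndex] (hm : ∀ h ∈ H, m • h = h) :
    (Set.range fun g : G => period m g).Finite := by
  have := H.finite_quotient_of_finiteIndex
  refine (Set.finite_range fun q : G ⧸ H => period m q.out).subset ?_
  rintro _ ⟨g, rfl⟩
  obtain ⟨h, hout⟩ := QuotientGroup.mk_out_eq_mul H g
  exact ⟨g, by simp only [hout, period_mul_eq_of_smul_eq (hm h h.2)]⟩

end Period

variable {G : Type*} [Group G] {H : Subgroup G} {T : MulAut G}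

theorem inv_mul_map_mem_centralizer_s11 {F : Type*} [FunLike F G G] [MonoidHomClass F G G]
    [H.Normal] {f : F} (hf : ∀ h ∈ H, f h = h) (g : G) :
    g⁻¹ * f g ∈ Subgroup.centralizer (H : Set G) := by
  refine Subgroup.mem_centralizer_iff.2 fun h hh => ?_
  have hconj : f g * h * (f g)⁻¹ = g * h * g⁻¹ := by
    simpa only [map_mul, map_inv, hf h hh] using hf _ (Subgroup.Normal.conj_mem ‹_› h hh g)
  calc h * (g⁻¹ * f g) = g⁻¹ * (g * h * g⁻¹) * f g := by group
    _ = g⁻¹ * f g * h := by rw [← hconj]; group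

theorem exists_pos_forall_inv_mul_pow_apply_mem [H.Normal] [H.FiniteIndex]
    (hT : H.map (T : G →* G) = H) :
    ∃ k : ℕ, 0 < k ∧ ∀ n, k ∣ n → ∀ g, g⁻¹ * (T ^ n) g ∈ H := by
  have := H.finite_quotient_of_finiteIndex
  let Tbar : MulAut (G ⧸ H) := QuotientGroup.congr H H T hT
  have hTbar (n : ℕ) (g : G) : (Tbar ^ n) (g : G ⧸ H) = ((T ^ n) g : G) := by
    induction n with
    | zero => rfl
    | succ n ih =>
      rw [pow_succ', pow_succ', MulAut.mul_apply, MulAut.mul_apply, ih]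
      exact QuotientGroup.congr_mk H H T hT _
  have : Finite (MulAut (G ⧸ H)) := MulEquiv.finite_left
  refine ⟨orderOf Tbar, orderOf_pos Tbar, fun n hn g => QuotientGroup.eq.1 ?_⟩
  rw [← hTbar, orderOf_dvd_iff_pow_eq_one.1 hn, MulAut.one_apply]

theorem tendsto_nhds_bot_iff_eventually_notMem {ι : Type*} {l : Filter ι} {A : ι → Subgroup G} :
    Tendsto A l (𝓝 ⊥) ↔ ∀ g ≠ 1, ∀ᶠ i in l, g ∉ A i := by
  constructor
  · intro hA g hg
    have hopen : IsOpen {B : Subgroup G | (B : Set G) ∩ {g} = ∅} :=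
      .basic _ (.inl ⟨{g}, Set.finite_singleton g, rfl⟩)
    have hbot : ((⊥ : Subgroup G) : Set G) ∩ {g} = ∅ := by
      simpa only [Set.inter_singleton_eq_empty, SetLike.mem_coe, Subgroup.mem_bot] using hg
    filter_upwards [hA.eventually (hopen.mem_nhds hbot)] with i hi
    exact Set.inter_singleton_eq_empty.1 hi
  · intro hA
    rw [TopologicalSpace.tendsto_nhds_generateFrom_iff]
    rintro _ (⟨K, hK, rfl⟩ | ⟨U, rfl⟩) hbot
    · have hK1 : (1 : G) ∉ K := fun h1 =>
        Set.eq_empty_iff_forall_notMem.1 hbot 1 ⟨Subgroup.one_mem _, h1⟩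
      have hev : ∀ g ∈ K, ∀ᶠ i in l, g ∉ A i := fun g hg => hA g (ne_of_mem_of_not_mem hg hK1)
      filter_upwards [hK.eventually_all.2 hev] with i hi
      exact Set.eq_empty_iff_forall_notMem.2 fun g hg => hi g hg.2 hg.1
    · obtain ⟨_, rfl : _ = 1, h1U⟩ := hbot
      exact Eventually.of_forall fun i => ⟨1, (A i).one_mem, h1U⟩

theorem tendsto_autMap_cofinite_nhds_bot {A : Subgroup G} (hA : (A : Set G).Finite)
    (hper : ∀ y ∈ A, y ≠ 1 → period T y = 0) :
    Tendsto (fun n : ℤ => autMap T n A) cofinite (𝓝 ⊥) := by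
  refine tendsto_nhds_bot_iff_eventually_notMem.2 fun g hg => ?_
  have hmove : ∀ y ∈ (A : Set G), ∀ᶠ n : ℤ in cofinite, (T ^ n) y ≠ g := by
    intro y hy
    obtain rfl | hy1 := eq_or_ne y 1
    · exact Eventually.of_forall fun n => by rwa [map_one, ne_comm]
    · exact (zpow_smul_injective_of_period_eq_zero (hper y hy hy1)).tendsto_cofinite.eventually
        (eventually_cofinite_ne g)
  filter_upwards [hA.eventually_all.2 hmove] with n hn
  rintro ⟨y, hy, hyg⟩
  exact hn y hy hyg

namespace ClassNC

theorem exists_period_ne_zero_of_isOfFinOrder (hT : ClassNC T) {x : G} (hx : x ≠ 1)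
    (hfin : IsOfFinOrder x) : ∃ y ∈ Subgroup.zpowers x, y ≠ 1 ∧ period T y ≠ 0 := by
  by_contra! hper
  have hlim := tendsto_autMap_cofinite_nhds_bot (finite_zpowers.2 hfin) hper
  have hcast : Tendsto (Nat.cast : ℕ → ℤ) atTop cofinite :=
    Nat.cofinite_eq_atTop ▸ Nat.cast_injective.tendsto_cofinite
  exact hT _ ⟨x, rfl⟩ (Subgroup.zpowers_ne_bot.2 hx) _ (hlim.comp hcast)

theorem exists_mem_zpowers_period_ne_zero (hT : ClassNC T) [H.FiniteIndex]
    (hid : ∀ h ∈ H, T h = h) {x : G} (hx : x ≠ 1) :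
    ∃ y ∈ Subgroup.zpowers x, y ≠ 1 ∧ period T y ≠ 0 := by
  obtain ⟨n, hn, -, hxn⟩ :=
    Subgroup.exists_pow_mem_of_index_ne_zero (Subgroup.FiniteIndex.index_ne_zero (H := H)) x
  by_cases h1 : x ^ n = 1
  · exact hT.exists_period_ne_zero_of_isOfFinOrder hx (isOfFinOrder_iff_pow_eq_one.2 ⟨n, hn, h1⟩)
  · have hperiod : period T (x ^ n) = 1 := period_eq_one_iff.2 (hid _ hxn)
    exact ⟨x ^ n, Subgroup.npow_mem_zpowers x n, h1, hperiod ▸ one_ne_zero⟩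

end ClassNC

theorem classNC_fixed_point_subgroup_general [H.Normal] [H.FiniteIndex] (hT : ClassNC T)
    (hid : ∀ h ∈ H, T h = h) :
    ∃ m : ℕ, 0 < m ∧
      ∃ G' : Subgroup G, (G' : Set G) = {g : G | (T ^ m) g = g} ∧ G'.FiniteIndex ∧
        H ≤ G' ∧
        (∀ g : G, g⁻¹ * (T ^ m) g ∈ H ⊓ Subgroup.centralizer (H : Set G)) ∧
        (∀ x : G, x ≠ 1 → Subgroup.zpowers x ⊓ G' ≠ ⊥) ∧
        (∀ x : G, x ∉ G' → (Set.range fun n : ℕ => (T ^ n) x).Infinite) := by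
  have hmap : H.map (T : G →* G) = H :=
    le_antisymm (by rintro _ ⟨h, hh, rfl⟩; exact (hid h hh).symm ▸ hh)
      fun h hh => ⟨h, hh, hid h hh⟩
  obtain ⟨k, hk, hquot⟩ := exists_pos_forall_inv_mul_pow_apply_mem hmap
  obtain ⟨l, hl, hdvd⟩ := exists_pos_forall_dvd_of_finite (finite_range_period (m := T) hid)
  let G' : Subgroup G := (T ^ (k * l)).toMonoidHom.eqLocus (MonoidHom.id G)
  have mem_of_period {x : G} (hx : period T x ≠ 0) : x ∈ G' :=
    pow_smul_eq_iff_period_dvd.2 ((hdvd _ ⟨x, rfl⟩ hx).mul_left k)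
  have hle : H ≤ G' := fun h hh => mem_of_period <|
    (period_eq_one_iff (m := T)).2 (hid h hh) ▸ one_ne_zero
  refine ⟨k * l, Nat.mul_pos hk hl, G', rfl, Subgroup.finiteIndex_of_le hle, hle, fun g => ?_,
    fun x hx => ?_, fun x hx => ?_⟩
  · exact ⟨hquot _ (dvd_mul_right k l) g, inv_mul_map_mem_centralizer_s11 hle g⟩
  · obtain ⟨y, hyx, hy1, hy⟩ := hT.exists_mem_zpowers_period_ne_zero hid hx
    exact (Subgroup.ne_bot_iff_exists_ne_one).2
      ⟨⟨y, hyx, mem_of_period hy⟩, fun h => hy1 (congrArg Subtype.val h)⟩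
  · have hx0 : period T x = 0 := not_not.1 fun h => hx (mem_of_period h)
    exact Set.infinite_range_of_injective
      ((zpow_smul_injective_of_period_eq_zero hx0).comp Nat.cast_injective)

end

/-- for `T` in class (NC) restricting to the identity on a finite-index
normal subgroup `H` with finitely generated center, there is `m ≥ 1` such that the fixed
point subgroup `G'` of `T^m` has finite index, contains `H`, `T^m` acts trivially on
`G/Z(H)`, every nontrivial cyclic subgroup meets `G'` nontrivially, and the `T`-orbit of
any point outside `G'` is infinite. -/
theorem classNC_fixed_point_subgroup {G : Type*} [Group G]
    (H : Subgroup G) [H.Normal] (hfi : H.FiniteIndex)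
    (hfg : Group.FG ↥(H ⊓ Subgroup.centralizer (H : Set G)))
    (T : MulAut G) (hT : ClassNC T) (hid : ∀ h ∈ H, T h = h) :
    ∃ m : ℕ, 0 < m ∧
      ∃ G' : Subgroup G, (G' : Set G) = {g : G | (T ^ m) g = g} ∧ G'.FiniteIndex ∧
        H ≤ G' ∧
        (∀ g : G, g⁻¹ * (T ^ m) g ∈ H ⊓ Subgroup.centralizer (H : Set G)) ∧
        (∀ x : G, x ≠ 1 → Subgroup.zpowers x ⊓ G' ≠ ⊥) ∧
        (∀ x : G, x ∉ G' → (Set.range fun n : ℕ => (T ^ n) x).Infinite) :=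
  classNC_fixed_point_subgroup_general hT hid
end

section
/- Let G be a discrete polycyclic group with unique maximal nilpotent normal subgroup G_nil, and let T be an automorphism of G. Then T belongs to class (NC) if and only if there exist an integer n ≥ 1 and a subgroup G' of finite index in G containing G_nil such that T^n restricted to G' is the identity and, for every nontrivial element x of G, the cyclic subgroup generated by x intersects G' nontrivially. Moreover, if G is nilpotent, then T belongs to class (NC) if and only if T^n = Id for some integer n ≥ 1. -/
/-!
The elements with finite `T`-orbit form a subgroup `P`. In a discrete group, subgroups tend to `{e}`
exactly when they eventually avoid each nontrivial element, so a nontrivial element of `P` in a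
cyclic subgroup `A` keeps the images of `A` away from `{e}`. Conversely, if the images of `A = ⟨x⟩`
do not tend to `{e}`, some `g ≠ e` lies in infinitely many of them, so its `T`-orbit returns to
`⟨x⟩` infinitely often. When all subgroups are finitely generated, an automorphism mapping a power
`x ^ a` of an element of infinite order to `x ^ b` satisfies `|a| = |b|`, just as the rational
eigenvalues of an invertible integral matrix are `±1`; so the orbit of `g` meets `⟨x⟩` in a finite
set, and `g` is periodic. Hence `T` is in class (NC) if and only if `P` meets every nontrivial
cyclic subgroup nontrivially.

Such a `P` contains a nonzero power of every element, which forces it to have finite index in a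
polycyclic group. It contains every characteristic nilpotent subgroup `N`, because an element of `N`
has only finitely many roots of a given order in `N`, and these are permuted by the powers of `T`
fixing it. As `P` is finitely generated, a single power of `T` fixes all of it.
-/

open Filter Topology
open scoped nonZeroDivisors IsMulCommutative

universe u

section DirectedUnion

theorem directed_of_le_mul {ι α : Type*} [CommMagma ι] [Preorder α] {F : ι → α}
    (hF : ∀ m n, F m ≤ F (m * n)) : Directed (· ≤ ·) F :=
  fun m n => ⟨m * n, hF m n, mul_comm n m ▸ hF n m⟩

theorem exists_le_of_fg_of_le_iSup {G ι : Type*} [Group G] [Nonempty ι] {K : ι → Subgroup G}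
    (hK : Directed (· ≤ ·) K) {H : Subgroup G} (hH : H.FG) (hle : H ≤ ⨆ i, K i) :
    ∃ i, H ≤ K i := by
  obtain ⟨s, rfl⟩ := hH
  have hs : (s : Set G) ⊆ ⋃ i, (K i : Set G) := by
    rwa [← Subgroup.coe_iSup_of_directed hK, ← Subgroup.closure_le]
  obtain ⟨i, hi⟩ := Directed.exists_mem_subset_of_finset_subset_biUnion hK hs
  exact ⟨i, (Subgroup.closure_le _).2 hi⟩

end DirectedUnion

section NoetherianGroup

/-- A group is Noetherian if all its subgroups are finitely generated; equivalently, its subgroups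
satisfy the ascending chain condition. -/
class IsNoetherianGroup (G : Type*) [Group G] : Prop where
  fg : ∀ H : Subgroup G, H.FG

theorem fg_of_fg_map_of_fg_inf_ker {G G' : Type*} [Group G] [Group G'] (f : G →* G')
    {H : Subgroup G} (hmap : (H.map f).FG) (hker : (H ⊓ f.ker).FG) : H.FG := by
  classical
  obtain ⟨s, hs⟩ := hmap
  have hsub : (s : Set G') ⊆ f '' H := by
    rw [← Subgroup.coe_map, ← hs]
    exact Subgroup.subset_closure
  obtain ⟨t, htH, rfl⟩ := Finset.subset_set_image_iff.1 hsub
  rw [Finset.coe_image, ← MonoidHom.map_closure] at hs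
  have hH : H = Subgroup.closure t ⊔ (H ⊓ f.ker) := by
    refine le_antisymm (fun h hh => ?_) (sup_le ((Subgroup.closure_le _).2 htH) inf_le_left)
    obtain ⟨c, hc, hcf⟩ : f h ∈ (Subgroup.closure (t : Set G)).map f := hs ▸ ⟨h, hh, rfl⟩
    rw [← mul_inv_cancel_left c h]
    refine Subgroup.mul_mem_sup hc ⟨H.mul_mem (H.inv_mem ?_) hh, ?_⟩
    · exact (Subgroup.closure_le _).2 htH hc
    · exact f.mem_ker.2 (by rw [map_mul, map_inv, hcf, inv_mul_cancel])
  rw [hH]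
  exact Subgroup.FG.sup ⟨t, rfl⟩ hker

namespace IsNoetherianGroup

variable {G G' : Type*} [Group G] [Group G']

theorem of_surjective [IsNoetherianGroup G] (f : G →* G') (hf : Function.Surjective f) :
    IsNoetherianGroup G' where
  fg H := by
    rw [← Subgroup.map_comap_eq_self_of_surjective hf H, ← Group.fg_iff_subgroup_fg]
    have := (Group.fg_iff_subgroup_fg _).2 (fg (H.comap f))
    exact Group.fg_of_surjective (f.subgroupMap_surjective (H.comap f))

theorem of_injective [IsNoetherianGroup G'] (f : G →* G') (hf : Function.Injective f) :
    IsNoetherianGroup G where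
  fg H := by
    rw [Subgroup.fg_iff_submonoid_fg]
    exact Submonoid.FG.map_injective f hf ((Subgroup.fg_iff_submonoid_fg _).1 (fg (H.map f)))

instance [IsNoetherianGroup G] : Group.FG G := Group.fg_def.2 (fg ⊤)

instance [IsNoetherianGroup G] (H : Subgroup G) : IsNoetherianGroup H :=
  of_injective H.subtype H.subtype_injective

instance [IsNoetherianGroup G] (N : Subgroup G) [N.Normal] : IsNoetherianGroup (G ⧸ N) :=
  of_surjective (QuotientGroup.mk' N) (QuotientGroup.mk'_surjective N)

theorem of_isCyclic [IsCyclic G] : IsNoetherianGroup G where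
  fg H := by
    obtain ⟨g, rfl⟩ := H.isCyclic_iff_exists_zpowers_eq_top.1 inferInstance
    exact ⟨{g}, by rw [Finset.coe_singleton, Subgroup.zpowers_eq_closure]⟩

theorem of_quotient (N : Subgroup G) [N.Normal] [IsNoetherianGroup N]
    [IsNoetherianGroup (G ⧸ N)] : IsNoetherianGroup G where
  fg H := by
    refine fg_of_fg_map_of_fg_inf_ker (QuotientGroup.mk' N) (fg _) ?_
    rw [QuotientGroup.ker_mk', ← Subgroup.subgroupOf_map_subtype, ← Group.fg_iff_subgroup_fg]
    exact Group.fg_of_surjective (N.subtype.subgroupMap_surjective (H.subgroupOf N))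

end IsNoetherianGroup

end NoetherianGroup

section RootDense

variable {G G' : Type*} [Group G] [Group G']

/-- A subgroup is root-dense if it contains a nonzero power of every element of the group, that is,
if its isolator is the whole group. -/
def IsRootDense (H : Subgroup G) : Prop :=
  ∀ x : G, ∃ k : ℤ, k ≠ 0 ∧ x ^ k ∈ H

theorem IsRootDense.comap {H : Subgroup G'} (hH : IsRootDense H) (f : G →* G') :
    IsRootDense (H.comap f) := fun x => by
  simpa only [Subgroup.mem_comap, map_zpow] using hH (f x)

theorem IsRootDense.map {H : Subgroup G} (hH : IsRootDense H) {f : G →* G'}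
    (hf : Function.Surjective f) : IsRootDense (H.map f) := fun y => by
  obtain ⟨x, rfl⟩ := hf y
  obtain ⟨k, hk, hx⟩ := hH x
  exact ⟨k, hk, map_zpow f x k ▸ Subgroup.mem_map_of_mem f hx⟩

theorem isRootDense_of_forall_zpowers_inf_ne_bot {H : Subgroup G}
    (hH : ∀ x : G, x ≠ 1 → Subgroup.zpowers x ⊓ H ≠ ⊥) : IsRootDense H := fun x => by
  rcases eq_or_ne x 1 with rfl | hx
  · exact ⟨1, one_ne_zero, by simp only [one_zpow, one_mem]⟩
  obtain ⟨⟨_, ⟨k, rfl⟩, hk⟩, hk_ne⟩ := Subgroup.ne_bot_iff_exists_ne_one.1 (hH x hx)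
  refine ⟨k, ?_, hk⟩
  rintro rfl
  exact hk_ne (Subtype.ext (zpow_zero x))

theorem relIndex_sup_ne_zero {H N : Subgroup G} [N.Normal] (h : H.relIndex N ≠ 0) :
    H.relIndex (N ⊔ H) ≠ 0 := by
  have : (H.subgroupOf N).FiniteIndex := ⟨h⟩
  have hsurj : Function.Surjective
      (Subgroup.quotientSubgroupOfEmbeddingOfLE H (le_sup_left : N ≤ N ⊔ H)) := by
    rintro ⟨g, hg⟩
    obtain ⟨n, hn, b, hb, rfl⟩ := Subgroup.mem_sup_of_normal_left.1 hg
    refine ⟨QuotientGroup.mk ⟨n, hn⟩, QuotientGroup.eq.2 ?_⟩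
    simpa [Subgroup.mem_subgroupOf] using hb
  have := Finite.of_surjective _ hsurj
  exact Subgroup.index_ne_zero_of_finite

/-- The property of a group that all its root-dense subgroups have finite index. -/
def FiniteIndexOfRootDense (G : Type*) [Group G] : Prop :=
  ∀ H : Subgroup G, IsRootDense H → H.FiniteIndex

namespace FiniteIndexOfRootDense

theorem of_surjective (hG : FiniteIndexOfRootDense G) {f : G →* G'}
    (hf : Function.Surjective f) : FiniteIndexOfRootDense G' := fun H hH =>
  ⟨H.index_comap_of_surjective hf ▸ (hG _ (hH.comap f)).index_ne_zero⟩

theorem of_fg_commGroup (A : Type*) [CommGroup A] [Group.FG A] : FiniteIndexOfRootDense A :=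
  fun H hH => by
    have htors : IsMulTorsion (A ⧸ H) := by
      rintro ⟨x⟩
      obtain ⟨m, hm, hx⟩ := hH x
      exact isOfFinOrder_iff_zpow_eq_one.2 ⟨m, hm, (QuotientGroup.eq_one_iff _).2 hx⟩
    have := CommGroup.finite_of_fg_isMulTorsion _ htors
    exact Subgroup.finiteIndex_of_finite_quotient

theorem of_isCyclic [IsCyclic G] : FiniteIndexOfRootDense G :=
  letI := IsCyclic.commGroup (α := G)
  haveI := IsNoetherianGroup.of_isCyclic (G := G)
  of_fg_commGroup G

theorem of_quotient (N : Subgroup G) [N.Normal] (hN : FiniteIndexOfRootDense N)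
    (hGN : FiniteIndexOfRootDense (G ⧸ N)) : FiniteIndexOfRootDense G := fun H hH => by
  have hrel : H.relIndex N ≠ 0 := (hN _ (hH.comap N.subtype)).index_ne_zero
  have hmap := (hGN _ (hH.map (QuotientGroup.mk'_surjective N))).index_ne_zero
  rw [Subgroup.index_map, QuotientGroup.ker_mk', sup_comm] at hmap
  refine ⟨?_⟩
  rw [← Subgroup.relIndex_mul_index (le_sup_right : H ≤ N ⊔ H)]
  exact mul_ne_zero (relIndex_sup_ne_zero hrel) (left_ne_zero_of_mul hmap)

end FiniteIndexOfRootDense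

end RootDense

namespace IsPolycyclic

theorem induction_on {P : ∀ (G : Type u) [Group G], Prop} {G : Type u} [Group G]
    (hG : IsPolycyclic G) (cyclic : ∀ (C : Type u) [Group C] [IsCyclic C], P C)
    (mulEquiv : ∀ {A B : Type u} [Group A] [Group B], A ≃* B → P A → P B)
    (extension : ∀ {A : Type u} [Group A] (N : Subgroup A) [N.Normal], P N → P (A ⧸ N) → P A) :
    P G := by
  obtain ⟨k, s, hs_top, hs_bot, hs⟩ := hG
  have hP : ∀ i, P (s i) := by
    intro i
    induction i using Fin.reverseInduction with
    | last => exact hs_bot ▸ cyclic (⊥ : Subgroup G)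
    | cast i ih =>
      obtain ⟨hle, hnormal, hcyclic⟩ := hs i
      exact extension _ (mulEquiv (Subgroup.subgroupOfEquivOfLe hle).symm ih) (cyclic _)
  exact mulEquiv Subgroup.topEquiv (hs_top ▸ hP 0)

variable {G : Type u} [Group G]

theorem isNoetherianGroup (hG : IsPolycyclic G) : IsNoetherianGroup G :=
  hG.induction_on (P := fun A _ => IsNoetherianGroup A) (fun _ => .of_isCyclic)
    (fun e _ => .of_surjective e.toMonoidHom e.surjective) fun N _ _ _ => .of_quotient N

theorem finiteIndexOfRootDense (hG : IsPolycyclic G) : FiniteIndexOfRootDense G :=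
  hG.induction_on (P := fun A _ => FiniteIndexOfRootDense A) (fun _ => .of_isCyclic)
    (fun e h => h.of_surjective (f := e.toMonoidHom) e.surjective) fun N _ => .of_quotient N

end IsPolycyclic

section ContentIdeal

variable {R M : Type*} [CommRing R] [AddCommGroup M] [Module R M]

variable (R) in
/-- The content of a vector: the ideal of values at it of all linear functionals. -/
def contentIdeal (v : M) : Ideal R :=
  LinearMap.range (Module.Dual.eval R M v)

theorem mem_contentIdeal {v : M} {r : R} :
    r ∈ contentIdeal R v ↔ ∃ φ : Module.Dual R M, φ v = r :=
  Iff.rfl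

theorem contentIdeal_smul (a : R) (v : M) :
    contentIdeal R (a • v) = Ideal.span {a} * contentIdeal R v := by
  ext r
  simp only [mem_contentIdeal, Ideal.mem_span_singleton_mul, map_smul, smul_eq_mul,
    exists_exists_eq_and]

theorem contentIdeal_linearEquiv (f : M ≃ₗ[R] M) (v : M) :
    contentIdeal R (f v) = contentIdeal R v := by
  ext r
  exact ⟨fun ⟨φ, hφ⟩ => ⟨φ ∘ₗ f, hφ⟩,
    fun ⟨φ, hφ⟩ => ⟨φ ∘ₗ f.symm, by simpa using hφ⟩⟩

variable [IsDomain R] [IsPrincipalIdealRing R] [Module.Finite R M]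

theorem contentIdeal_ne_bot {v : M} (hv : v ∉ Submodule.torsion R M) : contentIdeal R v ≠ ⊥ := by
  intro hbot
  refine hv ((Submodule.Quotient.mk_eq_zero _).1 ?_)
  refine (Module.forall_dual_apply_eq_zero_iff R _).1 fun φ => ?_
  have hφ : φ (Submodule.Quotient.mk v) ∈ contentIdeal R v :=
    mem_contentIdeal.2 ⟨φ ∘ₗ Submodule.mkQ _, rfl⟩
  rwa [hbot] at hφ

theorem associated_of_map_smul_eq_smul (f : M ≃ₗ[R] M) {v : M} (hv : v ∉ Submodule.torsion R M)
    {a b : R} (h : f (a • v) = b • v) : Associated a b := by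
  rw [← Ideal.span_singleton_eq_span_singleton]
  refine mul_right_cancel₀ (contentIdeal_ne_bot hv) ?_
  rw [← contentIdeal_smul, ← contentIdeal_smul, ← h, contentIdeal_linearEquiv]

end ContentIdeal

section VirtualCentralizer

variable {G : Type*} [Group G]

/-- The elements commuting with some nonzero power of `x`. -/
def virtualCentralizer (x : G) : Subgroup G :=
  ⨆ k : ℤ⁰, Subgroup.centralizer {x ^ (k : ℤ)}

theorem directed_centralizer_zpow (x : G) :
    Directed (· ≤ ·) fun k : ℤ⁰ => Subgroup.centralizer {x ^ (k : ℤ)} :=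
  directed_of_le_mul fun m n g hg => by
    rw [Subgroup.mem_centralizer_singleton_iff] at hg ⊢
    rw [Submonoid.coe_mul, zpow_mul]
    exact Commute.zpow_right hg n

theorem mem_virtualCentralizer {x g : G} :
    g ∈ virtualCentralizer x ↔ ∃ k : ℤ, k ≠ 0 ∧ Commute g (x ^ k) := by
  rw [virtualCentralizer, Subgroup.mem_iSup_of_directed (directed_centralizer_zpow x)]
  simp only [Subgroup.mem_centralizer_singleton_iff, Subtype.exists,
    mem_nonZeroDivisors_iff_ne_zero, exists_prop, Commute, SemiconjBy]

theorem virtualCentralizer_zpow (x : G) {a : ℤ} (ha : a ≠ 0) :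
    virtualCentralizer (x ^ a) = virtualCentralizer x := by
  ext g
  simp only [mem_virtualCentralizer, ← zpow_mul]
  constructor
  · rintro ⟨k, hk0, hk⟩
    exact ⟨a * k, mul_ne_zero ha hk0, hk⟩
  · rintro ⟨k, hk0, hk⟩
    exact ⟨k, hk0, by rw [mul_comm, zpow_mul]; exact hk.zpow_right a⟩

theorem map_virtualCentralizer (S : G ≃* G) (x : G) :
    (virtualCentralizer x).map S.toMonoidHom = virtualCentralizer (S x) := by
  ext g
  obtain ⟨g, rfl⟩ := S.surjective g
  rw [Subgroup.mem_map_equiv]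
  simp only [MulEquiv.symm_apply_apply, mem_virtualCentralizer, ← map_zpow,
    commute_map_iff S.injective]

theorem exists_zpow_mem_center_virtualCentralizer [IsNoetherianGroup G] (x : G) :
    ∃ z ∈ Subgroup.center (virtualCentralizer x), ∃ k : ℤ, k ≠ 0 ∧ (z : G) = x ^ k := by
  obtain ⟨k, hk⟩ := exists_le_of_fg_of_le_iSup (directed_centralizer_zpow x)
    (IsNoetherianGroup.fg (virtualCentralizer x)) le_rfl
  have hmem : x ^ (k : ℤ) ∈ virtualCentralizer x :=
    mem_virtualCentralizer.2 ⟨k, nonZeroDivisors.coe_ne_zero k, Commute.refl _⟩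
  refine ⟨⟨_, hmem⟩, Subgroup.mem_center_iff.2 fun g => Subtype.ext ?_, k,
    nonZeroDivisors.coe_ne_zero k, rfl⟩
  exact Subgroup.mem_centralizer_singleton_iff.1 (hk g.2)

end VirtualCentralizer

section Commensurable

theorem natAbs_eq_of_map_zpow_eq_of_fg_commGroup {A : Type*} [CommGroup A] [Group.FG A]
    (S : A ≃* A) {x : A} (hx : ¬IsOfFinOrder x) {a b : ℤ} (h : S (x ^ a) = x ^ b) :
    a.natAbs = b.natAbs := by
  have : Module.Finite ℤ (Additive A) := Module.Finite.iff_addGroup_fg.2 inferInstance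
  have hv : Additive.ofMul x ∉ Submodule.torsion ℤ (Additive A) := fun ⟨k, hk⟩ =>
    hx (isOfFinOrder_iff_zpow_eq_one.2 ⟨k, nonZeroDivisors.coe_ne_zero k, hk⟩)
  exact Int.associated_iff_natAbs.1
    (associated_of_map_smul_eq_smul (MulEquiv.toAdditive S).toIntLinearEquiv hv h)

variable {G : Type*} [Group G] [IsNoetherianGroup G]

theorem natAbs_eq_of_map_zpow_eq (S : G ≃* G) {x : G} (hx : ¬IsOfFinOrder x) {a b : ℤ}
    (h : S (x ^ a) = x ^ b) : a.natAbs = b.natAbs := by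
  have hinj : Function.Injective fun n : ℤ => x ^ n := injective_zpow_iff_not_isOfFinOrder.2 hx
  rcases eq_or_ne a 0 with rfl | ha
  · rw [zpow_zero, map_one, ← zpow_zero x] at h
    rw [hinj h]
  rcases eq_or_ne b 0 with rfl | hb
  · rw [zpow_zero, map_eq_one_iff S S.injective, ← zpow_zero x] at h
    rw [hinj h]
  -- `x` and its nonzero powers have the same virtual centralizer, which `S` therefore preserves;
  -- some nonzero power of `x` is central in it, which reduces the claim to abelian groups.
  have hinv : (virtualCentralizer x).map S.toMonoidHom = virtualCentralizer x := by
    rw [← virtualCentralizer_zpow x ha, map_virtualCentralizer, h, virtualCentralizer_zpow x hb,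
      virtualCentralizer_zpow x ha]
  let R : virtualCentralizer x ≃* virtualCentralizer x :=
    (S.subgroupMap _).trans (MulEquiv.subgroupCongr hinv)
  obtain ⟨z, hz, k, hk, hzx⟩ := exists_zpow_mem_center_virtualCentralizer x
  refine natAbs_eq_of_map_zpow_eq_of_fg_commGroup (A := Subgroup.center (virtualCentralizer x))
    (Subgroup.centerCongr R) (x := ⟨z, hz⟩) (fun hfin => ?_) ?_
  · obtain ⟨n, hn, hzn⟩ := isOfFinOrder_iff_zpow_eq_one.1 hfin
    refine hx (isOfFinOrder_iff_zpow_eq_one.2 ⟨k * n, mul_ne_zero hk hn, ?_⟩)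
    rw [zpow_mul, ← hzx]
    exact congrArg (fun w : Subgroup.center (virtualCentralizer x) => (w : G)) hzn
  · refine Subtype.ext (Subtype.ext ?_)
    have hS : S ((z : G) ^ a) = (z : G) ^ b := by
      rw [hzx, ← zpow_mul, mul_comm k, zpow_mul, map_zpow, h, ← zpow_mul, ← zpow_mul, mul_comm b]
    exact hS

theorem finite_orbit_inter_zpowers (T : MulAut G) (x g : G) :
    (Set.range (fun n : ℤ => (T ^ n) g) ∩ Subgroup.zpowers x).Finite := by
  by_cases hx : IsOfFinOrder x
  · have : Finite (Subgroup.zpowers x) := finite_zpowers.2 hx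
    exact (Set.toFinite _).subset Set.inter_subset_right
  rcases Set.eq_empty_or_nonempty (Set.range (fun n : ℤ => (T ^ n) g) ∩ Subgroup.zpowers x)
    with hempty | ⟨_, ⟨i, rfl⟩, a, ha⟩
  · rw [hempty]
    exact Set.finite_empty
  refine (Set.toFinite {x ^ a, x ^ (-a)}).subset ?_
  rintro _ ⟨⟨j, rfl⟩, b, hb⟩
  have hab : (T ^ (j - i)) (x ^ a) = x ^ b := by
    simp only at ha hb
    rw [ha, hb, ← MulAut.mul_apply, ← zpow_add, sub_add_cancel]
  rw [← hb]
  rcases Int.natAbs_eq_natAbs_iff.1 (natAbs_eq_of_map_zpow_eq _ hx hab) with rfl | rfl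
  · exact Or.inl rfl
  · exact Or.inr (by rw [neg_neg]; rfl)

end Commensurable

section Roots

theorem finite_setOf_zpow_eq_one {A : Type*} [CommGroup A] [IsNoetherianGroup A] {k : ℤ}
    (hk : k ≠ 0) : {z : A | z ^ k = 1}.Finite := by
  have : Finite (zpowGroupHom k : A →* A).ker :=
    CommGroup.finite_of_fg_isMulTorsion _ fun z =>
      isOfFinOrder_iff_zpow_eq_one.2 ⟨k, hk, Subtype.ext z.2⟩
  exact Set.toFinite ((zpowGroupHom k : A →* A).ker : Set A)

theorem finite_setOf_zpow_eq {N : Type*} [Group N] [Group.IsNilpotent N] [IsNoetherianGroup N]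
    {k : ℤ} (hk : k ≠ 0) (g : N) : {y : N | y ^ k = g}.Finite := by
  suffices ∀ (_ : IsNoetherianGroup N) (g : N), {y : N | y ^ k = g}.Finite from this ‹_› g
  refine Group.nilpotent_center_quotient_ind
    (P := fun N _ _ => IsNoetherianGroup N → ∀ g : N, {y : N | y ^ k = g}.Finite) N ?_ ?_
  · exact fun _ _ _ _ _ => Set.toFinite _
  intro N _ _ ih hN g
  have hfiber (q : N ⧸ Subgroup.center N) : {y : N | y ^ k = g ∧ (y : N ⧸ _) = q}.Finite := by
    rcases Set.eq_empty_or_nonempty {y : N | y ^ k = g ∧ (y : N ⧸ Subgroup.center N) = q}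
      with hempty | ⟨y, hy, rfl⟩
    · rw [hempty]
      exact Set.finite_empty
    have hroots : {z : Subgroup.center N | z ^ k = 1}.Finite := finite_setOf_zpow_eq_one hk
    refine (hroots.image fun z : Subgroup.center N => y * (z : N)).subset ?_
    rintro x ⟨hx, hxy⟩
    have hz : y⁻¹ * x ∈ Subgroup.center N := QuotientGroup.eq.1 hxy.symm
    refine ⟨⟨_, hz⟩, Subtype.ext ?_, mul_inv_cancel_left y x⟩
    have hpow := (show Commute y (y⁻¹ * x) from Subgroup.mem_center_iff.1 hz y).mul_zpow k
    rwa [mul_inv_cancel_left, hx, hy, left_eq_mul] at hpow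
  refine ((ih inferInstance (g : N ⧸ _)).biUnion fun q _ => hfiber q).subset fun y hy => ?_
  exact Set.mem_biUnion (x := (y : N ⧸ _)) (congrArg _ hy) ⟨hy, rfl⟩

end Roots

section Periodic

variable {G : Type*} [Group G] {T : MulAut G} {g : G}

theorem zpow_mul_apply_eq_self {m : ℤ} (h : (T ^ m) g = g) (n : ℤ) : (T ^ (m * n)) g = g := by
  rw [zpow_mul]
  exact zpow_mem (show T ^ m ∈ MulAction.stabilizer (MulAut G) g from h) n

/-- The subgroup of elements with finite orbit under the powers of `T`. -/
def periodicSubgroup (T : MulAut G) : Subgroup G :=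
  ⨆ n : ℤ⁰, (T ^ (n : ℤ)).toMonoidHom.eqLocus (MonoidHom.id G)

theorem directed_eqLocus_zpow (T : MulAut G) : Directed (· ≤ ·)
    fun n : ℤ⁰ => (T ^ (n : ℤ)).toMonoidHom.eqLocus (MonoidHom.id G) :=
  directed_of_le_mul fun _ n _ hg => zpow_mul_apply_eq_self hg n

theorem mem_periodicSubgroup : g ∈ periodicSubgroup T ↔ ∃ n : ℤ, n ≠ 0 ∧ (T ^ n) g = g := by
  rw [periodicSubgroup, Subgroup.mem_iSup_of_directed (directed_eqLocus_zpow T)]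
  simp only [Subtype.exists, mem_nonZeroDivisors_iff_ne_zero, exists_prop]
  rfl

theorem mem_periodicSubgroup_of_zpow_apply_eq {i j : ℤ} (hij : i ≠ j)
    (h : (T ^ i) g = (T ^ j) g) : g ∈ periodicSubgroup T :=
  mem_periodicSubgroup.2 ⟨-j + i, by lia, by
    rw [zpow_add, MulAut.mul_apply, h, ← MulAut.mul_apply, ← zpow_add, neg_add_cancel, zpow_zero,
      MulAut.one_apply]⟩

theorem finite_range_zpow_apply_iff :
    (Set.range fun n : ℤ => (T ^ n) g).Finite ↔ g ∈ periodicSubgroup T := by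
  constructor
  · intro hfin
    obtain ⟨i, -, j, -, hij, h⟩ := Set.infinite_univ.exists_ne_map_eq_of_mapsTo
      (fun n _ => Set.mem_range_self n) hfin
    exact mem_periodicSubgroup_of_zpow_apply_eq hij h
  · intro hg
    obtain ⟨n, hn, hgn⟩ := mem_periodicSubgroup.1 hg
    refine ((Set.finite_Ico 0 |n|).image fun i : ℤ => (T ^ i) g).subset ?_
    rintro _ ⟨i, rfl⟩
    refine ⟨i % n, ⟨Int.emod_nonneg i hn, Int.emod_lt_abs i hn⟩, ?_⟩
    nth_rw 2 [← Int.emod_add_mul_ediv i n]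
    simp only [zpow_add, MulAut.mul_apply, zpow_mul_apply_eq_self hgn]

theorem exists_pow_apply_eq_self_of_mem_periodicSubgroup [IsNoetherianGroup G] (T : MulAut G) :
    ∃ n : ℕ, 0 < n ∧ ∀ g ∈ periodicSubgroup T, (T ^ n) g = g := by
  obtain ⟨k, hk⟩ := exists_le_of_fg_of_le_iSup (directed_eqLocus_zpow T)
    (IsNoetherianGroup.fg (periodicSubgroup T)) le_rfl
  refine ⟨(k : ℤ).natAbs, Int.natAbs_pos.2 (nonZeroDivisors.coe_ne_zero k), fun g hg => ?_⟩
  rw [← zpow_natCast, ← Int.mul_sign_self]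
  exact zpow_mul_apply_eq_self (hk hg) _

theorem mem_periodicSubgroup_of_pow_apply_eq {n : ℕ} (hn : 0 < n) (h : (T ^ n) g = g) :
    g ∈ periodicSubgroup T :=
  mem_periodicSubgroup.2 ⟨n, Int.natCast_ne_zero.2 hn.ne', by rwa [zpow_natCast]⟩

theorem zpow_apply_mem_periodicSubgroup (hg : g ∈ periodicSubgroup T) (i : ℤ) :
    (T ^ i) g ∈ periodicSubgroup T := by
  obtain ⟨n, hn, hgn⟩ := mem_periodicSubgroup.1 hg
  refine mem_periodicSubgroup.2 ⟨n, hn, ?_⟩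
  rw [← MulAut.mul_apply, (Commute.zpow_zpow_self T n i).eq, MulAut.mul_apply, hgn]

theorem le_periodicSubgroup_of_isNilpotent [IsNoetherianGroup G]
    (hT : IsRootDense (periodicSubgroup T)) (N : Subgroup G) [Group.IsNilpotent N]
    (hN : ∀ n : ℤ, autMap T n N ≤ N) : N ≤ periodicSubgroup T := by
  intro x hx
  obtain ⟨m, hm, hxm⟩ := hT x
  obtain ⟨k, hk, hkx⟩ := mem_periodicSubgroup.1 hxm
  have hroot (j : ℤ) : (T ^ (k * j)) x ^ m = x ^ m := by
    rw [← map_zpow, zpow_mul_apply_eq_self hkx]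
  have hmaps : Set.MapsTo (fun j : ℤ => (T ^ (k * j)) x) Set.univ
      (Subtype.val '' {y : N | y ^ m = ⟨x, hx⟩ ^ m}) := fun j _ =>
    ⟨⟨_, hN _ (Subgroup.mem_map_of_mem _ hx)⟩, Subtype.ext (hroot j), rfl⟩
  obtain ⟨i, -, j, -, hij, h⟩ := Set.infinite_univ.exists_ne_map_eq_of_mapsTo hmaps
    ((finite_setOf_zpow_eq hm _).image _)
  exact mem_periodicSubgroup_of_zpow_apply_eq ((mul_right_injective₀ hk).ne hij) h

end Periodic

section Chabauty

variable {G : Type*} [Group G] {T : MulAut G}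

theorem tendsto_subgroup_nhds_bot_iff {ι : Type*} {l : Filter ι} {u : ι → Subgroup G} :
    Tendsto u l (𝓝 ⊥) ↔ ∀ g : G, g ≠ 1 → ∀ᶠ i in l, g ∉ u i := by
  constructor
  · intro hu g hg
    have hopen : IsOpen {H : Subgroup G | (H : Set G) ∩ {g} = ∅} :=
      .basic _ (Or.inl ⟨{g}, Set.finite_singleton g, rfl⟩)
    have hbot : (⊥ : Subgroup G) ∈ {H : Subgroup G | (H : Set G) ∩ {g} = ∅} := by
      simpa using hg
    filter_upwards [hu (hopen.mem_nhds hbot)] with i hi hgi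
    exact Set.eq_empty_iff_forall_notMem.1 hi g ⟨hgi, rfl⟩
  · intro hu
    refine TopologicalSpace.tendsto_nhds_generateFrom_iff.2 ?_
    rintro _ (⟨K, hK, rfl⟩ | ⟨U, rfl⟩) hbot
    · have hdisj : ∀ᶠ i in l, ∀ g ∈ K, g ∉ u i := (eventually_all_finite hK).2 fun g hgK =>
        hu g fun hg => Set.eq_empty_iff_forall_notMem.1 hbot g ⟨hg, hgK⟩
      filter_upwards [hdisj] with i hi
      exact Set.eq_empty_of_forall_notMem fun g hg => hi g hg.2 hg.1
    · obtain ⟨_, rfl, h1U⟩ := hbot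
      exact Eventually.of_forall fun i => ⟨1, one_mem (u i), h1U⟩

theorem mem_autMap {n : ℤ} {H : Subgroup G} {g : G} :
    g ∈ autMap T n H ↔ (T ^ (-n)) g ∈ H := by
  rw [zpow_neg]
  exact Subgroup.mem_map_equiv

theorem ClassNC.zpowers_inf_periodicSubgroup_ne_bot [IsNoetherianGroup G] (hT : ClassNC T) {x : G}
    (hx : x ≠ 1) : Subgroup.zpowers x ⊓ periodicSubgroup T ≠ ⊥ := by
  have hlim := hT _ ⟨x, rfl⟩ (Subgroup.zpowers_ne_bot.2 hx) fun n => n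
  rw [tendsto_subgroup_nhds_bot_iff] at hlim
  push Not at hlim
  obtain ⟨g, hg1, hg⟩ := hlim
  have hmaps : Set.MapsTo (fun n : ℕ => (T ^ (-n : ℤ)) g)
      {n : ℕ | g ∈ autMap T n (Subgroup.zpowers x)}
      (Set.range (fun n : ℤ => (T ^ n) g) ∩ Subgroup.zpowers x) :=
    fun n hn => ⟨⟨-n, rfl⟩, mem_autMap.1 hn⟩
  obtain ⟨i, hi, j, -, hij, h⟩ :=
    (Nat.frequently_atTop_iff_infinite.1 hg).exists_ne_map_eq_of_mapsTo hmaps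
      (finite_orbit_inter_zpowers T x g)
  have hg_periodic : g ∈ periodicSubgroup T :=
    mem_periodicSubgroup_of_zpow_apply_eq (neg_injective.ne (Nat.cast_injective.ne hij)) h
  refine Subgroup.ne_bot_iff_exists_ne_one.2
    ⟨⟨_, mem_autMap.1 hi, zpow_apply_mem_periodicSubgroup hg_periodic _⟩, fun h1 => hg1 ?_⟩
  exact (map_eq_one_iff _ (MulEquiv.injective _)).1 (congrArg Subtype.val h1)

theorem classNC_of_forall_zpowers_inf_ne_bot
    (hT : ∀ x : G, x ≠ 1 → Subgroup.zpowers x ⊓ periodicSubgroup T ≠ ⊥) : ClassNC T := by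
  rintro _ ⟨x, rfl⟩ hx n hlim
  obtain ⟨⟨y, hyx, hy⟩, hy1⟩ :=
    Subgroup.ne_bot_iff_exists_ne_one.1 (hT x (Subgroup.zpowers_ne_bot.1 hx))
  have havoid : ∀ᶠ k in atTop, ∀ g ∈ Set.range fun i : ℤ => (T ^ i) y,
      g ∉ autMap T (n k) (Subgroup.zpowers x) := by
    refine (eventually_all_finite (finite_range_zpow_apply_iff.2 hy)).2 ?_
    rintro _ ⟨i, rfl⟩
    refine tendsto_subgroup_nhds_bot_iff.1 hlim _ fun h1 => hy1 (Subtype.ext ?_)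
    exact (map_eq_one_iff _ (MulEquiv.injective _)).1 h1
  obtain ⟨k, hk⟩ := havoid.exists
  exact hk _ ⟨n k, rfl⟩ (Subgroup.mem_map_of_mem _ hyx)

theorem ClassNC.isRootDense_periodicSubgroup [IsNoetherianGroup G] (hT : ClassNC T) :
    IsRootDense (periodicSubgroup T) :=
  isRootDense_of_forall_zpowers_inf_ne_bot fun _ => hT.zpowers_inf_periodicSubgroup_ne_bot

theorem classNC_iff_exists_pow_eq_one [IsNoetherianGroup G] [Group.IsNilpotent G] :
    ClassNC T ↔ ∃ n : ℕ, 0 < n ∧ T ^ n = 1 := by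
  constructor
  · intro hT
    have : Group.IsNilpotent (⊤ : Subgroup G) :=
      Group.nilpotent_of_mulEquiv Subgroup.topEquiv.symm
    have htop := le_periodicSubgroup_of_isNilpotent hT.isRootDense_periodicSubgroup ⊤
      fun _ => le_top
    obtain ⟨n, hn, hfix⟩ := exists_pow_apply_eq_self_of_mem_periodicSubgroup T
    exact ⟨n, hn, MulEquiv.ext fun g => hfix g (htop trivial)⟩
  · rintro ⟨n, hn, hTn⟩
    refine classNC_of_forall_zpowers_inf_ne_bot fun x hx => ?_
    have htop : periodicSubgroup T = ⊤ := (Subgroup.eq_top_iff' _).2 fun g =>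
      mem_periodicSubgroup_of_pow_apply_eq hn (by rw [hTn, MulAut.one_apply])
    rwa [htop, inf_top_eq, Subgroup.zpowers_ne_bot]

end Chabauty

theorem characteristic_of_forall_normal_isNilpotent_le {G : Type*} [Group G] {N : Subgroup G}
    [N.Normal] [Group.IsNilpotent N]
    (hN : ∀ K : Subgroup G, K.Normal → Group.IsNilpotent K → K ≤ N) : N.Characteristic :=
  Subgroup.characteristic_iff_map_le.2 fun φ => hN _ (‹N.Normal›.map _ φ.surjective)
    (Group.nilpotent_of_mulEquiv (φ.subgroupMap N))

/-- Both conditions on `G` hold for cyclic and for finite groups and pass to extensions, so this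
covers all virtually polycyclic groups. -/
theorem polycyclic_classNC_iff_general {G : Type*} [Group G] [IsNoetherianGroup G]
    (hG : FiniteIndexOfRootDense G) (Gnil : Subgroup G) (h1 : Gnil.Normal)
    (h2 : Group.IsNilpotent Gnil)
    (h3 : ∀ N : Subgroup G, N.Normal → Group.IsNilpotent N → N ≤ Gnil) (T : MulAut G) :
    (ClassNC T ↔ ∃ (n : ℕ) (G' : Subgroup G), 0 < n ∧ G'.FiniteIndex ∧ Gnil ≤ G' ∧
      (∀ g ∈ G', (T ^ n) g = g) ∧
      ∀ x : G, x ≠ 1 → Subgroup.zpowers x ⊓ G' ≠ ⊥) ∧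
    (Group.IsNilpotent G → (ClassNC T ↔ ∃ n : ℕ, 0 < n ∧ T ^ n = 1)) := by
  refine ⟨⟨fun hT => ?_, ?_⟩, fun _ => classNC_iff_exists_pow_eq_one⟩
  · have hchar := characteristic_of_forall_normal_isNilpotent_le h3
    have hdense := hT.isRootDense_periodicSubgroup
    obtain ⟨n, hn, hfix⟩ := exists_pow_apply_eq_self_of_mem_periodicSubgroup T
    exact ⟨n, periodicSubgroup T, hn, hG _ hdense,
      le_periodicSubgroup_of_isNilpotent hdense Gnil fun k =>
        Subgroup.characteristic_iff_map_le.1 hchar (T ^ k),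
      hfix, fun _ => hT.zpowers_inf_periodicSubgroup_ne_bot⟩
  · rintro ⟨n, G', hn, -, -, hfix, hmeet⟩
    have hle : G' ≤ periodicSubgroup T := fun g hg =>
      mem_periodicSubgroup_of_pow_apply_eq hn (hfix g hg)
    exact classNC_of_forall_zpowers_inf_ne_bot fun x hx =>
      ne_bot_of_le_ne_bot (hmeet x hx) (inf_le_inf_left _ hle)

/-- for a discrete polycyclic group `G` with maximal nilpotent normal
subgroup `G_nil`, `T ∈ (NC)` iff some `T^n` is the identity on a finite-index subgroup
`G'` containing `G_nil` that meets every nontrivial cyclic subgroup nontrivially;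
if `G` is nilpotent, `T ∈ (NC)` iff `T` has finite order. -/
theorem polycyclic_classNC_iff {G : Type*} [Group G] (hG : IsPolycyclic G)
    (Gnil : Subgroup G) (h1 : Gnil.Normal) (h2 : Group.IsNilpotent ↥Gnil)
    (h3 : ∀ N : Subgroup G, N.Normal → Group.IsNilpotent ↥N → N ≤ Gnil)
    (T : MulAut G) :
    (ClassNC T ↔ ∃ (n : ℕ) (G' : Subgroup G), 0 < n ∧ G'.FiniteIndex ∧ Gnil ≤ G' ∧
      (∀ g ∈ G', (T ^ n) g = g) ∧
      ∀ x : G, x ≠ 1 → Subgroup.zpowers x ⊓ G' ≠ ⊥) ∧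
    (Group.IsNilpotent G → (ClassNC T ↔ ∃ n : ℕ, 0 < n ∧ T ^ n = 1)) := by
  have := hG.isNoetherianGroup
  exact polycyclic_classNC_iff_general hG.finiteIndexOfRootDense Gnil h1 h2 h3 T
end

section
/- Let G be a countable discrete group with the property that for every g ∈ G the set R_g of roots of g in G is finite. Then the complement in Sub^c_G of any neighbourhood of the trivial subgroup {e} in Sub^c_G is finite. Moreover, if G is infinite, then no automorphism of G acts expansively on Sub^c_G. -/
/-! Once the nontrivial elements have only finitely many roots, the cyclic subgroups `⟨y⟩` tend
to the trivial subgroup as `y` leaves finite sets. If an automorphism were expansive, every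
nontrivial cyclic subgroup would leave some fixed neighbourhood of the trivial subgroup at some
time, so every nontrivial element would have an iterate in one finite set `S`. For an element `x`
of infinite order this fails: the iterates of `x ^ k` are `k`-th powers, and an element of infinite
order with finitely many roots is a `k`-th power for only finitely many `k`. -/

open Filter Topology

section Roots

variable {M : Type*}

section Monoid

variable [Monoid M]

/-- The set `R_g` of roots of `g`: the elements with a positive power equal to `g`. -/
def rootSet (g : M) : Set M :=
  {y | ∃ n : ℕ, 0 < n ∧ y ^ n = g}

lemma mem_rootSet_one {x : M} : x ∈ rootSet 1 ↔ IsOfFinOrder x :=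
  isOfFinOrder_iff_pow_eq_one.symm

lemma exists_not_isOfFinOrder_of_finite_rootSet_one [Infinite M] (h : (rootSet (1 : M)).Finite) :
    ∃ x : M, ¬IsOfFinOrder x := by
  simpa only [mem_rootSet_one] using h.exists_notMem

end Monoid

section LeftCancelMonoid

variable [LeftCancelMonoid M]

lemma finite_setOf_exists_pow_eq {g : M} (hg : ¬IsOfFinOrder g)
    (hroots : (rootSet g).Finite) : {k : ℕ | ∃ y : M, y ^ k = g}.Finite := by
  have exponent_pos {k : ℕ} {y : M} (hy : y ^ k = g) : 0 < k := by
    refine Nat.pos_of_ne_zero ?_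
    rintro rfl
    exact hg (hy ▸ pow_zero y ▸ IsOfFinOrder.one)
  choose! root hroot using fun (k : ℕ) (hk : ∃ y : M, y ^ k = g) => hk
  have root_mem : Set.MapsTo root {k | ∃ y : M, y ^ k = g} (rootSet g) := fun k hk =>
    ⟨k, exponent_pos (hroot k hk), hroot k hk⟩
  refine Set.Finite.of_injOn root_mem (fun k hk l hl hkl => ?_) hroots
  have root_infinite_order : ¬IsOfFinOrder (root k) := fun h => hg (hroot k hk ▸ h.pow)
  have pow_eq : root k ^ k = root k ^ l := by rw [hroot k hk, hkl, hroot l hl]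
  exact injective_pow_iff_not_isOfFinOrder.mpr root_infinite_order pow_eq

lemma exists_pos_forall_pow_notMem {S : Set M} (hS : S.Finite)
    (hroots : ∀ g ∈ S, ¬IsOfFinOrder g → (rootSet g).Finite) :
    ∃ k : ℕ, 0 < k ∧ ∀ y : M, ¬IsOfFinOrder y → y ^ k ∉ S := by
  have exponents_finite :
      (⋃ g ∈ {g ∈ S | ¬IsOfFinOrder g}, {k : ℕ | ∃ y : M, y ^ k = g}).Finite :=
    (hS.subset (Set.sep_subset S _)).biUnion fun g hg =>
      finite_setOf_exists_pow_eq hg.2 (hroots g hg.1 hg.2)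
  obtain ⟨k, hk⟩ := (exponents_finite.insert 0).exists_notMem
  obtain ⟨hk0, hk⟩ := not_or.mp hk
  refine ⟨k, Nat.pos_of_ne_zero hk0, fun y hy hyS => hk ?_⟩
  have pow_infinite_order : ¬IsOfFinOrder (y ^ k) := by simp [isOfFinOrder_pow, hy, hk0]
  exact Set.mem_biUnion ⟨hyS, pow_infinite_order⟩ ⟨y, rfl⟩

end LeftCancelMonoid

lemma finite_setOf_mem_zpowers {G : Type*} [Group G] {g : G} (hg : g ≠ 1)
    (hroots : (rootSet g).Finite) : {y : G | g ∈ Subgroup.zpowers y}.Finite := by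
  refine (hroots.union (hroots.preimage inv_injective.injOn)).subset fun y hy => ?_
  obtain ⟨n, rfl⟩ := Subgroup.mem_zpowers_iff.mp hy
  have hn : n ≠ 0 := by rintro rfl; exact hg (zpow_zero y)
  obtain ⟨m, rfl | rfl⟩ := n.eq_nat_or_neg
  · exact .inl ⟨m, by omega, by simp⟩
  · exact .inr ⟨m, by omega, by simp⟩

end Roots

section Chabauty

variable {G : Type*} [Group G]

lemma nhds_bot_eq_iInf_principal :
    𝓝 (⊥ : Subgroup G) = ⨅ g ∈ ({1}ᶜ : Set G), 𝓟 {H : Subgroup G | g ∉ H} := by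
  apply le_antisymm
  · refine le_iInf₂ fun g hg => le_principal_iff.mpr (IsOpen.mem_nhds ?_ (by simpa using hg))
    exact TopologicalSpace.isOpen_generateFrom_of_mem
      (.inl ⟨{g}, Set.finite_singleton g, by simp⟩)
  · rw [TopologicalSpace.nhds_generateFrom]
    refine le_iInf₂ fun s hs => le_principal_iff.mpr ?_
    obtain ⟨hbot, ⟨K, hK, rfl⟩ | ⟨U, rfl⟩⟩ := hs
    · have ne_one : ∀ g ∈ K, g ∈ ({1}ᶜ : Set G) := by
        rintro g hgK rfl
        exact (hbot : _ ∩ K = ∅).subset ⟨one_mem ⊥, hgK⟩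
      have eq_biInter : {H : Subgroup G | (H : Set G) ∩ K = ∅} = ⋂ g ∈ K, {H | g ∉ H} := by
        ext H
        simp [← Set.disjoint_iff_inter_eq_empty, Set.disjoint_right]
      rw [eq_biInter, biInter_mem hK]
      exact fun g hg => mem_iInf_of_mem g (mem_iInf_of_mem (ne_one g hg) (mem_principal_self _))
    · have one_mem_U : (1 : G) ∈ U := by
        obtain ⟨g, hg, hgU⟩ := hbot
        rwa [Subgroup.mem_bot.mp hg] at hgU
      exact univ_mem' fun H => ⟨1, one_mem H, one_mem_U⟩

lemma tendsto_nhds_bot_iff {ι : Type*} {l : Filter ι} {f : ι → Subgroup G} :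
    Tendsto f l (𝓝 ⊥) ↔ ∀ g : G, g ≠ 1 → ∀ᶠ i in l, g ∉ f i := by
  simp only [nhds_bot_eq_iInf_principal, tendsto_iInf, tendsto_principal, Set.mem_compl_iff,
    Set.mem_singleton_iff, Set.mem_ofPred_eq, ne_eq]

lemma tendsto_zpowers_cofinite (hroots : ∀ g : G, g ≠ 1 → (rootSet g).Finite) :
    Tendsto (Subgroup.zpowers : G → Subgroup G) cofinite (𝓝 ⊥) :=
  tendsto_nhds_bot_iff.mpr fun g hg =>
    (finite_setOf_mem_zpowers hg (hroots g hg)).eventually_cofinite_notMem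

lemma bot_mem_cyclicSubgroups : (⊥ : Subgroup G) ∈ cyclicSubgroups G :=
  ⟨1, Subgroup.zpowers_one_eq_bot.symm⟩

lemma finite_cyclicSubgroups_diff (hroots : ∀ g : G, g ≠ 1 → (rootSet g).Finite)
    {V : Set (Subgroup G)} (hV : V ∈ 𝓝 ⊥) : (cyclicSubgroups G \ V).Finite := by
  have generators_finite : {y : G | Subgroup.zpowers y ∉ V}.Finite :=
    tendsto_zpowers_cofinite hroots hV
  refine (generators_finite.image Subgroup.zpowers).subset ?_
  rintro _ ⟨⟨y, rfl⟩, hy⟩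
  exact Set.mem_image_of_mem _ hy

end Chabauty

section Expansive

variable {G : Type*} [Group G] {T : MulAut G}

lemma autMap_bot (n : ℤ) : autMap T n ⊥ = ⊥ :=
  Subgroup.map_bot _

lemma autMap_zpowers (n : ℤ) (x : G) :
    autMap T n (Subgroup.zpowers x) = Subgroup.zpowers ((T ^ n) x) :=
  MonoidHom.map_zpowers _ _

lemma ActsExpansivelyOn.exists_mem_nhds_bot {Y : Set (Subgroup G)} (hT : ActsExpansivelyOn T Y)
    (hY : ⊥ ∈ Y) : ∃ V ∈ 𝓝 (⊥ : Subgroup G), ∀ A ∈ Y, A ≠ ⊥ → ∃ n : ℤ, autMap T n A ∉ V := by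
  obtain ⟨W, hW, hdiag, hexp⟩ := hT
  refine ⟨(·, ⊥) ⁻¹' W, (hW.preimage (.prodMk_left ⊥)).mem_nhds (hdiag ⊥ hY), fun A hA hne => ?_⟩
  simpa only [autMap_bot] using! hexp A hA ⊥ hY hne

lemma not_actsExpansivelyOn_cyclicSubgroups (hroots : ∀ g : G, g ≠ 1 → (rootSet g).Finite)
    {x : G} (hx : ¬IsOfFinOrder x) : ¬ActsExpansivelyOn T (cyclicSubgroups G) := by
  intro hT
  obtain ⟨V, hV, escape⟩ := hT.exists_mem_nhds_bot bot_mem_cyclicSubgroups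
  have generators_finite : {y : G | Subgroup.zpowers y ∉ V}.Finite :=
    tendsto_zpowers_cofinite hroots hV
  obtain ⟨k, hk, pow_notMem⟩ := exists_pos_forall_pow_notMem generators_finite
    fun g _ hg => hroots g fun h => hg (h ▸ IsOfFinOrder.one)
  have zpowers_ne_bot : Subgroup.zpowers (x ^ k) ≠ ⊥ := fun h =>
    hx (isOfFinOrder_iff_pow_eq_one.mpr ⟨k, hk, Subgroup.zpowers_eq_bot.mp h⟩)
  obtain ⟨n, hn⟩ := escape _ ⟨x ^ k, rfl⟩ zpowers_ne_bot
  rw [autMap_zpowers, map_pow] at hn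
  have iterate_infinite_order : ¬IsOfFinOrder ((T ^ n) x) :=
    ((T ^ n).injective.isOfFinOrder_iff (f := (T ^ n).toMonoidHom)).not.mpr hx
  exact pow_notMem _ iterate_infinite_order hn

end Expansive

theorem finite_roots_nbhd_cofinite_and_no_expansive_general {G : Type*} [Group G]
    (hroots : ∀ g : G, g ≠ 1 → (rootSet g).Finite) :
    (∀ V : Set (Subgroup G), V ∈ 𝓝 (⊥ : Subgroup G) → (cyclicSubgroups G \ V).Finite) ∧
    ((∃ x : G, ¬IsOfFinOrder x) → ∀ T : MulAut G, ¬ActsExpansivelyOn T (cyclicSubgroups G)) :=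
  ⟨fun _ hV => finite_cyclicSubgroups_diff hroots hV,
    fun ⟨_, hx⟩ _ => not_actsExpansivelyOn_cyclicSubgroups hroots hx⟩

/-- for a countable discrete group `G` in which every element has finitely
many roots, the complement in `Sub^c_G` of any neighbourhood of the trivial subgroup is
finite; moreover if `G` is infinite, no automorphism of `G` acts expansively on
`Sub^c_G`. -/
theorem finite_roots_nbhd_cofinite_and_no_expansive {G : Type*} [Group G] [Countable G]
    (hroots : ∀ g : G, {y : G | ∃ n : ℕ, 0 < n ∧ y ^ n = g}.Finite) :
    (∀ V : Set (Subgroup G), V ∈ nhds (⊥ : Subgroup G) → (cyclicSubgroups G \ V).Finite) ∧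
    (Infinite G → ∀ T : MulAut G, ¬ ActsExpansivelyOn T (cyclicSubgroups G)) := by
  refine (finite_roots_nbhd_cofinite_and_no_expansive_general fun g _ => hroots g).imp_right ?_
  exact fun h _ => h (exists_not_isOfFinOrder_of_finite_rootSet_one (hroots 1))
end
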